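/- Let H = {1,…,m} and L = {1,…,n} be finite sets, let p = (p₁,…,p_m) ∈ [0,1]^m, and let F = (f₁,…,f_n) be an aligned tuple of nonnegative real-valued functions on the power set of H. Then for every tuple Π = (π₁,…,π_m) of partitions of L, E(Π, p, F) ≥ ∏_{l=1}^{n} E(f_l, μ_p), where μ_p is the product Bernoulli measure on subsets of H; that is, every staggered polling schedule yields an expectation at least as large as the fully separate schedule, whose value is the product of the individual expectations. -/

import Mathlib

open Finset

/-- Weight of a block `M` of a partition relative to a turnout set `S`. -/
def blockWeight {n : ℕ} (p : ℝ) (M S : Finset (Fin n)) : ℝ :=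
  if M ⊆ S then p else if M ∩ S = ∅ then 1 - p else 0

/-- The measure `μ_{π,p}` on subsets of `L = Fin n`. -/
def partMeasure {n : ℕ} (pt : Finpartition (univ : Finset (Fin n))) (p : ℝ)
    (S : Finset (Fin n)) : ℝ :=
  ∏ M ∈ pt.parts, blockWeight p M S

/-- `L_h(T) = {l : (h,l) ∈ T}`. -/
def Lh {m n : ℕ} (h : Fin m) (T : Finset (Fin m × Fin n)) : Finset (Fin n) :=
  univ.filter fun l => (h, l) ∈ T

/-- `H_l(T) = {h : (h,l) ∈ T}`. -/
def Hl {m n : ℕ} (l : Fin n) (T : Finset (Fin m × Fin n)) : Finset (Fin m) :=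
  univ.filter fun h => (h, l) ∈ T

/-- The measure `μ_{Π,p}` on subsets of `H × L`. -/
def schedMeasure {m n : ℕ} (Sch : Fin m → Finpartition (univ : Finset (Fin n)))
    (p : Fin m → ℝ) (T : Finset (Fin m × Fin n)) : ℝ :=
  ∏ h, partMeasure (Sch h) (p h) (Lh h T)

/-- `E(Π, p, F)`. -/
def schedExp {m n : ℕ} (Sch : Fin m → Finpartition (univ : Finset (Fin n)))
    (p : Fin m → ℝ) (F : Fin n → Finset (Fin m) → ℝ) : ℝ :=
  ∑ T : Finset (Fin m × Fin n), (∏ l, F l (Hl l T)) * schedMeasure Sch p T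

def IncreasingAt {m : ℕ} (f : Finset (Fin m) → ℝ) (h : Fin m) : Prop :=
  ∀ S : Finset (Fin m), f S ≤ f (insert h S)

def DecreasingAt {m : ℕ} (f : Finset (Fin m) → ℝ) (h : Fin m) : Prop :=
  ∀ S : Finset (Fin m), f (insert h S) ≤ f S

def Aligned {m n : ℕ} (F : Fin n → Finset (Fin m) → ℝ) : Prop :=
  ∀ h : Fin m, (∀ l, IncreasingAt (F l) h) ∨ (∀ l, DecreasingAt (F l) h)

/-- `Sch'` is coarser than `Sch`. -/
def Coarser {m n : ℕ} (Sch' Sch : Fin m → Finpartition (univ : Finset (Fin n))) : Prop :=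
  ∀ h, ∀ M ∈ (Sch h).parts, ∃ M' ∈ (Sch' h).parts, M ⊆ M'

/-- Product Bernoulli measure on subsets of `H = Fin m`. -/
def bern {m : ℕ} (p : Fin m → ℝ) (S : Finset (Fin m)) : ℝ :=
  (∏ h ∈ S, p h) * ∏ h ∈ Sᶜ, (1 - p h)

/-- Expectation with respect to the product Bernoulli measure. -/
def bernExp {m : ℕ} (p : Fin m → ℝ) (f : Finset (Fin m) → ℝ) : ℝ :=
  ∑ S : Finset (Fin m), f S * bern p S

/-- A Chebyshev-type inequality for a two-valued random variable. -/
lemma prod_mix_le_mix_prod {ι : Type*} (s : Finset ι) {q r : ℝ} (hq : 0 ≤ q) (hr : 0 ≤ r)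
    (hqr : q + r = 1) (a b : ι → ℝ) (hb : ∀ i, 0 ≤ b i) (hab : ∀ i, b i ≤ a i) :
    ∏ i ∈ s, (q * a i + r * b i) ≤ q * ∏ i ∈ s, a i + r * ∏ i ∈ s, b i := by
  classical
  induction s using Finset.induction_on with
  | empty => simp [hqr]
  | insert i s hi ih =>
    rw [prod_insert hi, prod_insert hi, prod_insert hi]
    have hprod : ∏ j ∈ s, b j ≤ ∏ j ∈ s, a j :=
      prod_le_prod (fun j _ => hb j) fun j _ => hab j
    have hmix : 0 ≤ q * a i + r * b i :=
      add_nonneg (mul_nonneg hq ((hb i).trans (hab i))) (mul_nonneg hr (hb i))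
    have hcov : 0 ≤ q * r * ((a i - b i) * (∏ j ∈ s, a j - ∏ j ∈ s, b j)) :=
      mul_nonneg (mul_nonneg hq hr)
        (mul_nonneg (sub_nonneg.2 (hab i)) (sub_nonneg.2 hprod))
    refine (mul_le_mul_of_nonneg_left ih hmix).trans ?_
    obtain rfl : r = 1 - q := by linarith
    nlinarith

lemma blockWeight_nonneg {n : ℕ} {p : ℝ} (hp : 0 ≤ p ∧ p ≤ 1) (M S : Finset (Fin n)) :
    0 ≤ blockWeight p M S := by
  unfold blockWeight
  split_ifs <;> linarith [hp.1, hp.2]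

lemma partMeasure_nonneg {n : ℕ} (pt : Finpartition (univ : Finset (Fin n))) {p : ℝ}
    (hp : 0 ≤ p ∧ p ≤ 1) (S : Finset (Fin n)) : 0 ≤ partMeasure pt p S :=
  prod_nonneg fun M _ => blockWeight_nonneg hp M S

/-- A point of a block lies in a union of blocks exactly when its block is one of them. -/
lemma Finpartition.mem_biUnion_iff_mem {n : ℕ} (pt : Finpartition (univ : Finset (Fin n)))
    {U : Finset (Finset (Fin n))} (hU : U ⊆ pt.parts) {M : Finset (Fin n)} (hM : M ∈ pt.parts)
    {l : Fin n} (hl : l ∈ M) : l ∈ U.biUnion id ↔ M ∈ U := by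
  simp only [mem_biUnion, id]
  constructor
  · rintro ⟨N, hN, hlN⟩
    rwa [pt.eq_of_mem_parts hM (hU hN) hl hlN]
  · exact fun h => ⟨M, h, hl⟩

lemma Finpartition.biUnion_injOn {n : ℕ} (pt : Finpartition (univ : Finset (Fin n))) :
    Set.InjOn (fun U : Finset (Finset (Fin n)) => U.biUnion id) pt.parts.powerset := by
  intro U hU V hV hUV
  have hU' : U ⊆ pt.parts := by simpa using hU
  have hV' : V ⊆ pt.parts := by simpa using hV
  have hUV' : U.biUnion id = V.biUnion id := hUV
  have key : ∀ M ∈ pt.parts, (M ∈ U ↔ M ∈ V) := by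
    intro M hM
    obtain ⟨l, hl⟩ := pt.nonempty_of_mem_parts hM
    rw [← pt.mem_biUnion_iff_mem hU' hM hl, hUV', pt.mem_biUnion_iff_mem hV' hM hl]
  ext M
  exact ⟨fun h => (key M (hU' h)).1 h, fun h => (key M (hV' h)).2 h⟩

lemma blockWeight_biUnion {n : ℕ} (pt : Finpartition (univ : Finset (Fin n))) (p : ℝ)
    {U : Finset (Finset (Fin n))} (hU : U ⊆ pt.parts) {M : Finset (Fin n)} (hM : M ∈ pt.parts) :
    blockWeight p M (U.biUnion id) = if M ∈ U then p else 1 - p := by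
  obtain ⟨k, hk⟩ := pt.nonempty_of_mem_parts hM
  unfold blockWeight
  by_cases h : M ∈ U
  · rw [if_pos h, if_pos]
    exact fun l hl => (pt.mem_biUnion_iff_mem hU hM hl).2 h
  · rw [if_neg h, if_neg fun hs => h ((pt.mem_biUnion_iff_mem hU hM hk).1 (hs hk)), if_pos]
    refine eq_empty_of_forall_notMem fun l hl => h ?_
    rw [mem_inter] at hl
    exact (pt.mem_biUnion_iff_mem hU hM hl.1).1 hl.2

lemma Finpartition.prod_parts_prod {n : ℕ} (pt : Finpartition (univ : Finset (Fin n)))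
    (g : Fin n → ℝ) : ∏ M ∈ pt.parts, ∏ l ∈ M, g l = ∏ l, g l := by
  conv_rhs => rw [← pt.biUnion_parts]
  exact (prod_biUnion pt.disjoint).symm

/-- The blocks of a partition are independent under `partMeasure`. -/
lemma prod_parts_le_sum_partMeasure {n : ℕ} (pt : Finpartition (univ : Finset (Fin n))) {p : ℝ}
    (hp : 0 ≤ p ∧ p ≤ 1) (a b : Fin n → ℝ) (ha : ∀ l, 0 ≤ a l) (hb : ∀ l, 0 ≤ b l) :
    ∏ M ∈ pt.parts, (p * ∏ l ∈ M, a l + (1 - p) * ∏ l ∈ M, b l) ≤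
      ∑ S : Finset (Fin n), partMeasure pt p S * ∏ l, (if l ∈ S then a l else b l) := by
  have hterm : ∀ U ∈ pt.parts.powerset,
      (∏ M ∈ U, (p * ∏ l ∈ M, a l)) * ∏ M ∈ pt.parts \ U, ((1 - p) * ∏ l ∈ M, b l) =
        partMeasure pt p (U.biUnion id) *
          ∏ l, (if l ∈ U.biUnion id then a l else b l) := by
    intro U hU
    rw [mem_powerset] at hU
    rw [← pt.prod_parts_prod, partMeasure, ← prod_mul_distrib, ← prod_sdiff hU, mul_comm]
    congr 1
    · refine prod_congr rfl fun M hM => ?_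
      rw [mem_sdiff] at hM
      rw [blockWeight_biUnion pt p hU hM.1, if_neg hM.2]
      congr 1
      exact prod_congr rfl fun l hl =>
        (if_neg fun h => hM.2 ((pt.mem_biUnion_iff_mem hU hM.1 hl).1 h)).symm
    · refine prod_congr rfl fun M hM => ?_
      rw [blockWeight_biUnion pt p hU (hU hM), if_pos hM]
      congr 1
      exact prod_congr rfl fun l hl =>
        (if_pos ((pt.mem_biUnion_iff_mem hU (hU hM) hl).2 hM)).symm
  rw [prod_add, sum_congr rfl hterm,
    ← sum_image (f := fun S => partMeasure pt p S * ∏ l, (if l ∈ S then a l else b l))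
      pt.biUnion_injOn]
  refine sum_le_sum_of_subset_of_nonneg (subset_univ _) fun S _ _ => ?_
  refine mul_nonneg (partMeasure_nonneg pt hp S) (prod_nonneg fun l _ => ?_)
  split_ifs
  exacts [ha l, hb l]

/-- The theorem for a single voter. -/
lemma prod_mix_le_sum_partMeasure {n : ℕ} (pt : Finpartition (univ : Finset (Fin n))) {p : ℝ}
    (hp : 0 ≤ p ∧ p ≤ 1) (a b : Fin n → ℝ) (ha : ∀ l, 0 ≤ a l) (hb : ∀ l, 0 ≤ b l)
    (hab : (∀ l, b l ≤ a l) ∨ ∀ l, a l ≤ b l) :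
    ∏ l, (p * a l + (1 - p) * b l) ≤
      ∑ S : Finset (Fin n), partMeasure pt p S * ∏ l, (if l ∈ S then a l else b l) := by
  have hp' : 0 ≤ 1 - p := sub_nonneg.2 hp.2
  refine le_trans ?_ (prod_parts_le_sum_partMeasure pt hp a b ha hb)
  rw [← pt.prod_parts_prod]
  refine prod_le_prod (fun M _ => prod_nonneg fun l _ =>
    add_nonneg (mul_nonneg hp.1 (ha l)) (mul_nonneg hp' (hb l))) fun M _ => ?_
  rcases hab with h | h
  · exact prod_mix_le_mix_prod M hp.1 hp' (by ring) a b hb h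
  · simpa only [add_comm] using prod_mix_le_mix_prod M hp' hp.1 (by ring) b a ha h

/-- The restriction of a set function to the sets that contain `0`. -/
def withZero {m : ℕ} (f : Finset (Fin (m + 1)) → ℝ) (A : Finset (Fin m)) : ℝ :=
  f (insert 0 (A.map (Fin.succEmb m)))

/-- The restriction of a set function to the sets that avoid `0`. -/
def withoutZero {m : ℕ} (f : Finset (Fin (m + 1)) → ℝ) (A : Finset (Fin m)) : ℝ :=
  f (A.map (Fin.succEmb m))

lemma bern_eq_prod {m : ℕ} (p : Fin m → ℝ) (S : Finset (Fin m)) :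
    bern p S = ∏ h, (if h ∈ S then p h else 1 - p h) := by
  rw [prod_ite, bern]
  congr 1 <;> refine prod_congr ?_ fun _ _ => rfl <;> ext <;> simp

lemma bern_nonneg {m : ℕ} {p : Fin m → ℝ} (hp : ∀ h, 0 ≤ p h ∧ p h ≤ 1)
    (S : Finset (Fin m)) : 0 ≤ bern p S :=
  mul_nonneg (prod_nonneg fun h _ => (hp h).1) (prod_nonneg fun h _ => sub_nonneg.2 (hp h).2)

lemma bernExp_nonneg {m : ℕ} {p : Fin m → ℝ} (hp : ∀ h, 0 ≤ p h ∧ p h ≤ 1)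
    {f : Finset (Fin m) → ℝ} (hf : ∀ S, 0 ≤ f S) : 0 ≤ bernExp p f :=
  sum_nonneg fun S _ => mul_nonneg (hf S) (bern_nonneg hp S)

lemma bernExp_mono {m : ℕ} {p : Fin m → ℝ} (hp : ∀ h, 0 ≤ p h ∧ p h ≤ 1)
    {f g : Finset (Fin m) → ℝ} (hfg : ∀ S, f S ≤ g S) : bernExp p f ≤ bernExp p g :=
  sum_le_sum fun S _ => mul_le_mul_of_nonneg_right (hfg S) (bern_nonneg hp S)

lemma bernExp_succ {m : ℕ} (p : Fin (m + 1) → ℝ) (f : Finset (Fin (m + 1)) → ℝ) :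
    bernExp p f = p 0 * bernExp (fun h => p h.succ) (withZero f) +
      (1 - p 0) * bernExp (fun h => p h.succ) (withoutZero f) := by
  have huniv : (univ : Finset (Fin (m + 1))) = insert 0 (univ.map (Fin.succEmb m)) := by
    ext h; cases h using Fin.cases <;> simp
  have hpow : (univ.map (Fin.succEmb m)).powerset =
      (univ : Finset (Finset (Fin m))).image fun A => A.map (Fin.succEmb m) := by
    ext S
    simp only [mem_powerset, subset_map_iff, mem_image, mem_univ, true_and, subset_univ]
    exact ⟨fun ⟨A, h⟩ => ⟨A, h.symm⟩, fun ⟨A, h⟩ => ⟨A, h.symm⟩⟩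
  have hinj : Set.InjOn (fun A : Finset (Fin m) => A.map (Fin.succEmb m))
      (univ : Finset (Finset (Fin m))) := fun _ _ _ _ h => map_injective _ h
  unfold bernExp
  rw [← powerset_univ, huniv, sum_powerset_insert (by simp), hpow, sum_image hinj,
    sum_image hinj, mul_sum, mul_sum, add_comm]
  congr 1 <;> refine sum_congr rfl fun A _ => ?_ <;>
    simp [bern_eq_prod, Fin.prod_univ_succ, withZero, withoutZero, mul_left_comm]

/-- `schedExp` as a sum over the tuples of turnout sets of the individual voters. -/
lemma schedExp_eq_sum_pi {m n : ℕ} (Sch : Fin m → Finpartition (univ : Finset (Fin n)))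
    (p : Fin m → ℝ) (F : Fin n → Finset (Fin m) → ℝ) :
    schedExp Sch p F = ∑ t : Fin m → Finset (Fin n),
      (∏ l, F l (univ.filter fun h => l ∈ t h)) * ∏ h, partMeasure (Sch h) (p h) (t h) := by
  let e : Finset (Fin m × Fin n) ≃ (Fin m → Finset (Fin n)) :=
    { toFun := fun T h => Lh h T
      invFun := fun t => univ.filter fun x => x.2 ∈ t x.1
      left_inv := fun T => by ext; simp [Lh]
      right_inv := fun t => by ext; simp [Lh] }
  refine Fintype.sum_equiv e _ _ fun T => ?_
  simp [e, Lh, Hl, schedMeasure]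

lemma filter_mem_cons {m n : ℕ} (S : Finset (Fin n)) (t : Fin m → Finset (Fin n)) (l : Fin n)
    (f : Finset (Fin (m + 1)) → ℝ) :
    f (univ.filter fun h => l ∈ (Fin.cons S t : Fin (m + 1) → Finset (Fin n)) h) =
      (if l ∈ S then withZero f else withoutZero f) (univ.filter fun h => l ∈ t h) := by
  split_ifs with hl
  all_goals
    first | unfold withZero | unfold withoutZero
    congr 1
    ext h
    cases h using Fin.cases <;> simp [hl]

lemma schedExp_succ {m n : ℕ} (Sch : Fin (m + 1) → Finpartition (univ : Finset (Fin n)))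
    (p : Fin (m + 1) → ℝ) (F : Fin n → Finset (Fin (m + 1)) → ℝ) :
    schedExp Sch p F = ∑ S : Finset (Fin n), partMeasure (Sch 0) (p 0) S *
      schedExp (fun h => Sch h.succ) (fun h => p h.succ)
        (fun l => if l ∈ S then withZero (F l) else withoutZero (F l)) := by
  rw [schedExp_eq_sum_pi, ← (Fin.consEquiv fun _ => Finset (Fin n)).sum_comp,
    Fintype.sum_prod_type]
  refine sum_congr rfl fun S _ => ?_
  rw [schedExp_eq_sum_pi, mul_sum]
  refine sum_congr rfl fun t _ => ?_
  rw [← prod_congr rfl fun l _ => filter_mem_cons S t l (F l)]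
  simp only [Fin.consEquiv, Equiv.coe_fn_mk, Fin.prod_univ_succ, Fin.cons_zero, Fin.cons_succ]
  exact mul_left_comm _ _ _

lemma Aligned.restrict {m n : ℕ} {F : Fin n → Finset (Fin (m + 1)) → ℝ} (hF : Aligned F)
    (S : Finset (Fin n)) :
    Aligned fun l => if l ∈ S then withZero (F l) else withoutZero (F l) := by
  intro h
  refine (hF h.succ).imp (fun H l A => ?_) fun H l A => ?_
  all_goals
    dsimp only
    split_ifs
    · simpa [withZero, insert_comm] using H l (insert 0 (A.map (Fin.succEmb m)))
    · simpa [withoutZero] using H l (A.map (Fin.succEmb m))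

/-- Every staggered polling schedule yields an expectation at least as large as the
fully separate schedule, whose value is the product of the individual expectations. -/
theorem schedExp_ge_prod_bernExp {m n : ℕ}
    (p : Fin m → ℝ) (hp : ∀ h, 0 ≤ p h ∧ p h ≤ 1)
    (F : Fin n → Finset (Fin m) → ℝ)
    (hFnonneg : ∀ l S, 0 ≤ F l S) (hFaligned : Aligned F)
    (Sch : Fin m → Finpartition (univ : Finset (Fin n))) :
    ∏ l, bernExp p (F l) ≤ schedExp Sch p F := by
  induction m with
  | zero =>
    rw [schedExp_eq_sum_pi]
    simp [bernExp, bern, univ_unique, Subsingleton.elim _ (∅ : Finset (Fin 0))]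
  | succ m ih =>
    have hp' : ∀ h : Fin m, 0 ≤ p h.succ ∧ p h.succ ≤ 1 := fun h => hp h.succ
    have hstep : ∀ S : Finset (Fin n),
        ∏ l, (if l ∈ S then bernExp (fun h => p h.succ) (withZero (F l))
          else bernExp (fun h => p h.succ) (withoutZero (F l))) ≤
        schedExp (fun h => Sch h.succ) (fun h => p h.succ)
          (fun l => if l ∈ S then withZero (F l) else withoutZero (F l)) := by
      intro S
      refine le_of_eq_of_le (prod_congr rfl fun l _ => ?_)
        (ih _ hp' _ (fun l A => ?_) (hFaligned.restrict S) fun h => Sch h.succ)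
      · split_ifs <;> rfl
      · split_ifs <;> exact hFnonneg _ _
    rw [schedExp_succ]
    simp only [bernExp_succ]
    refine (prod_mix_le_sum_partMeasure (Sch 0) (hp 0) _ _
      (fun l => bernExp_nonneg hp' fun A => hFnonneg _ _)
      (fun l => bernExp_nonneg hp' fun A => hFnonneg _ _)
      ((hFaligned 0).imp (fun H l => bernExp_mono hp' fun A => H l _)
        fun H l => bernExp_mono hp' fun A => H l _)).trans ?_
    exact sum_le_sum fun S _ =>
      mul_le_mul_of_nonneg_left (hstep S) (partMeasure_nonneg _ (hp 0) S)
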